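/- Let η ∈ [0,1]. For every pair of real numbers Ω ≥ 0 and δ ≥ 0, there exist real numbers α ∈ [0,1] and β ≥ 0 with α + β ≥ η such that Ω = √((1−α)·β·(1−η+α+β)) and δ = √(α·(1+β)·(α+β−η)). -/

import Mathlib

/-!
Put `t = α + β`. At fixed `t ≥ η` the condition `(1 - α) * β * (1 - η + α + β) = Ω ^ 2` is the
quadratic equation `(1 - α) * (t - α) = Ω ^ 2 / (1 - η + t)`, whose smaller root `α` is at most
`1` and at most `t`, and is continuous in `t`. It is nonnegative from some smallest `t` onwards.
At that `t`, either `t = η` or `α = 0`, so `α * (1 + β) * (α + β - η)` vanishes; as `t → ∞` this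
quantity is unbounded because `α` stays away from `0`. It therefore takes the value `δ ^ 2`.
-/

/-- The smaller root `x` of `(p - x) * (q - x) = c`. It is real as soon as
`0 ≤ (p - q) ^ 2 + 4 * c`, and a junk value otherwise. -/
noncomputable def lowerRoot (p q c : ℝ) : ℝ :=
  (p + q - √((p - q) ^ 2 + 4 * c)) / 2

section LowerRoot

variable {p q c x : ℝ}

theorem sub_lowerRoot_mul_sub_lowerRoot (hdisc : 0 ≤ (p - q) ^ 2 + 4 * c) :
    (p - lowerRoot p q c) * (q - lowerRoot p q c) = c := by
  unfold lowerRoot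
  linear_combination Real.sq_sqrt hdisc / 4

theorem lowerRoot_comm (p q c : ℝ) : lowerRoot p q c = lowerRoot q p c := by
  rw [lowerRoot, lowerRoot, add_comm p q, sub_sq_comm p q]

theorem lowerRoot_le_left (hc : 0 ≤ c) : lowerRoot p q c ≤ p := by
  have hsqrt : q - p ≤ √((p - q) ^ 2 + 4 * c) := Real.le_sqrt_of_sq_le (by linarith)
  unfold lowerRoot
  linarith

theorem lowerRoot_le_right (hc : 0 ≤ c) : lowerRoot p q c ≤ q :=
  lowerRoot_comm p q c ▸ lowerRoot_le_left hc

theorem le_lowerRoot (hx : 2 * x ≤ p + q) (hc : c ≤ (p - x) * (q - x)) :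
    x ≤ lowerRoot p q c := by
  have hsqrt : √((p - q) ^ 2 + 4 * c) ≤ p + q - 2 * x :=
    Real.sqrt_le_iff.2 ⟨by linarith, by linarith⟩
  unfold lowerRoot
  linarith

theorem lowerRoot_sub_mul_sub (hx : 2 * x ≤ p + q) :
    lowerRoot p q ((p - x) * (q - x)) = x := by
  have hdisc : (p - q) ^ 2 + 4 * ((p - x) * (q - x)) = (p + q - 2 * x) ^ 2 := by ring
  rw [lowerRoot, hdisc, Real.sqrt_sq (by linarith)]
  ring

theorem continuous_lowerRoot :
    Continuous fun v : ℝ × ℝ × ℝ => lowerRoot v.1 v.2.1 v.2.2 := by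
  unfold lowerRoot
  fun_prop

end LowerRoot

/-- The coordinate `α` of the point of the level curve `(1 - α) * β * (1 - η + α + β) = A` on the
line `α + β = t`. -/
noncomputable def levelAlpha (η A t : ℝ) : ℝ :=
  lowerRoot 1 t (A / (1 - η + t))

/-- For `0 ≤ A`, the least `t ≥ η` with `A ≤ t * (1 - η + t)`, from which on
`levelAlpha η A t` is nonnegative. The number `-lowerRoot 0 (1 - η) A` is the larger root `t`
of `t * (1 - η + t) = A`. -/
noncomputable def levelStart (η A : ℝ) : ℝ :=
  max η (-lowerRoot 0 (1 - η) A)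

section LevelCurve

variable {η A B t : ℝ}

theorem levelAlpha_le_one (hA : 0 ≤ A) (ht : η ≤ t) : levelAlpha η A t ≤ 1 :=
  lowerRoot_le_left (div_nonneg hA (by linarith))

theorem levelAlpha_le (hA : 0 ≤ A) (ht : η ≤ t) : levelAlpha η A t ≤ t :=
  lowerRoot_le_right (div_nonneg hA (by linarith))

theorem one_sub_levelAlpha_mul (hA : 0 ≤ A) (ht : η ≤ t) :
    (1 - levelAlpha η A t) * (t - levelAlpha η A t) * (1 - η + t) = A := by
  have hpos : 0 < 1 - η + t := by linarith
  rw [levelAlpha, sub_lowerRoot_mul_sub_lowerRoot (by positivity), div_mul_cancel₀ _ hpos.ne']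

theorem continuousOn_levelAlpha (η A : ℝ) : ContinuousOn (levelAlpha η A) (Set.Ici η) := by
  have hquot : ContinuousOn (fun t => A / (1 - η + t)) (Set.Ici η) :=
    continuousOn_const.div (by fun_prop) fun t (ht : η ≤ t) => by linarith
  exact continuous_lowerRoot.comp_continuousOn
    (continuousOn_const.prodMk (continuousOn_id.prodMk hquot))

theorem le_levelStart (η A : ℝ) : η ≤ levelStart η A :=
  le_max_left _ _

theorem levelStart_nonneg (hA : 0 ≤ A) : 0 ≤ levelStart η A :=
  (neg_nonneg.2 (lowerRoot_le_left hA)).trans (le_max_right _ _)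

theorem le_mul_of_levelStart_le (hA : 0 ≤ A) (ht : levelStart η A ≤ t) :
    A ≤ t * (1 - η + t) := by
  set r := lowerRoot 0 (1 - η) A
  have hrt : -r ≤ t := (le_max_right _ _).trans ht
  have hr₀ : r ≤ 0 := lowerRoot_le_left hA
  have hr₁ : r ≤ 1 - η := lowerRoot_le_right hA
  calc A = (0 - r) * (1 - η - r) := (sub_lowerRoot_mul_sub_lowerRoot (by positivity)).symm
    _ ≤ t * (1 - η + t) := mul_le_mul (by linarith) (by linarith) (by linarith) (by linarith)

theorem levelAlpha_nonneg (hA : 0 ≤ A) (ht : levelStart η A ≤ t) : 0 ≤ levelAlpha η A t := by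
  have ht₀ : 0 ≤ t := (levelStart_nonneg hA).trans ht
  have hηt : η ≤ t := (le_levelStart η A).trans ht
  have hquot : A / (1 - η + t) ≤ t :=
    (div_le_iff₀ (by linarith)).2 (le_mul_of_levelStart_le hA ht)
  exact le_lowerRoot (by linarith) (by simpa only [sub_zero, one_mul] using hquot)

theorem levelAlpha_eq_zero (ht₀ : 0 ≤ t) (ht : η ≤ t) (hA : t * (1 - η + t) = A) :
    levelAlpha η A t = 0 := by
  have hpos : 0 < 1 - η + t := by linarith
  have hquot : A / (1 - η + t) = (1 - 0) * (t - 0) := by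
    rw [← hA, mul_div_cancel_right₀ _ hpos.ne', sub_zero, sub_zero, one_mul]
  rw [levelAlpha, hquot, lowerRoot_sub_mul_sub (by linarith)]

theorem levelStart_eq_or_levelAlpha_eq_zero (hA : 0 ≤ A) :
    levelStart η A = η ∨ levelAlpha η A (levelStart η A) = 0 := by
  refine (max_choice η (-lowerRoot 0 (1 - η) A)).imp_right fun hstart => ?_
  refine levelAlpha_eq_zero (levelStart_nonneg hA) (le_levelStart η A) ?_
  have hroot : (0 - lowerRoot 0 (1 - η) A) * (1 - η - lowerRoot 0 (1 - η) A) = A :=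
    sub_lowerRoot_mul_sub_lowerRoot (by positivity)
  rw [levelStart, hstart]
  linear_combination hroot

theorem half_le_levelAlpha (hA : 0 ≤ A) (ht : η ≤ t) (hAt : 2 * A + 1 ≤ t) :
    1 / 2 ≤ levelAlpha η A t := by
  have hquot : A / (1 - η + t) ≤ A := div_le_self hA (by linarith)
  exact le_lowerRoot (by linarith) (by linarith)

theorem exists_levelAlpha_mul_eq (hA : 0 ≤ A) (hB : 0 ≤ B) :
    ∃ t, levelStart η A ≤ t ∧
      levelAlpha η A t * (1 + (t - levelAlpha η A t)) * (t - η) = B := by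
  set f : ℝ → ℝ := fun t => levelAlpha η A t * (1 + (t - levelAlpha η A t)) * (t - η)
  set t₀ := levelStart η A
  set T := t₀ + 2 * A + 2 * B + 1
  have hηt₀ : η ≤ t₀ := le_levelStart η A
  have ht₀ : 0 ≤ t₀ := levelStart_nonneg hA
  have hηT : η ≤ T := by linarith
  have hcont : ContinuousOn f (Set.Icc t₀ T) := by
    have hα : ContinuousOn (levelAlpha η A) (Set.Icc t₀ T) :=
      (continuousOn_levelAlpha η A).mono fun t ht => hηt₀.trans ht.1
    fun_prop
  have hstart : f t₀ = 0 := by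
    rcases levelStart_eq_or_levelAlpha_eq_zero (η := η) hA with h | h <;> simp [f, t₀, h]
  have hend : B ≤ f T := by
    have hα : 1 / 2 ≤ levelAlpha η A T := half_le_levelAlpha hA hηT (by linarith)
    have hβ : levelAlpha η A T ≤ T := levelAlpha_le hA hηT
    calc B = 1 / 2 * 1 * (2 * B) := by ring
      _ ≤ f T := by
        unfold f
        gcongr <;> linarith
  obtain ⟨t, ht, hft⟩ :=
    intermediate_value_Icc (by linarith : t₀ ≤ T) hcont ⟨hstart.trans_le hB, hend⟩
  exact ⟨t, ht.1, hft⟩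

end LevelCurve

theorem stmt_12_general (η : ℝ) {Ω δ : ℝ} (hΩ : 0 ≤ Ω) (hδ : 0 ≤ δ) :
    ∃ α β : ℝ, α ∈ Set.Icc (0 : ℝ) 1 ∧ 0 ≤ β ∧ η ≤ α + β ∧
      Ω = Real.sqrt ((1 - α) * β * (1 - η + α + β)) ∧
      δ = Real.sqrt (α * (1 + β) * (α + β - η)) := by
  have hA : 0 ≤ Ω ^ 2 := sq_nonneg Ω
  obtain ⟨t, ht, hδt⟩ := exists_levelAlpha_mul_eq (η := η) hA (sq_nonneg δ)
  have hηt : η ≤ t := (le_levelStart η _).trans ht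
  have hΩt := one_sub_levelAlpha_mul hA hηt
  set α := levelAlpha η (Ω ^ 2) t
  refine ⟨α, t - α, ⟨levelAlpha_nonneg hA ht, levelAlpha_le_one hA hηt⟩,
    sub_nonneg.2 (levelAlpha_le hA hηt), by rwa [add_sub_cancel], ?_, ?_⟩
  · rw [add_assoc, add_sub_cancel, hΩt, Real.sqrt_sq hΩ]
  · rw [add_sub_cancel, hδt, Real.sqrt_sq hδ]

/-- the reparameterization `(α,β) ↦ (Ω,δ)` is surjective onto the
nonnegative quadrant. -/
theorem stmt_12 (η : ℝ) (hη : η ∈ Set.Icc (0 : ℝ) 1) (Ω δ : ℝ) (hΩ : 0 ≤ Ω) (hδ : 0 ≤ δ) :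
    ∃ α β : ℝ, α ∈ Set.Icc (0 : ℝ) 1 ∧ 0 ≤ β ∧ η ≤ α + β ∧
      Ω = Real.sqrt ((1 - α) * β * (1 - η + α + β)) ∧
      δ = Real.sqrt (α * (1 + β) * (α + β - η)) :=
  stmt_12_general η hΩ hδ
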